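/- Let r ≥ 3 and let D be a digraph on n vertices that contains no transitive tournament on r vertices. If every vertex has out-degree strictly greater than ((3r−7)/(3r−4))·n, then the underlying graph of D is (r−1)-colorable. -/

import Mathlib

/-- `f` enumerates a clique of the underlying graph whose last `k` vertices form a chain
dominated by everything before. -/
def ChainClique {V : Type*} (A : V → V → Prop) (r k : ℕ) (f : Fin r → V) : Prop :=
  ∀ i j : Fin r, i < j →
    (A (f i) (f j) ∨ A (f j) (f i)) ∧ (r ≤ (j : ℕ) + k → A (f i) (f j))

lemma chainClique_step {V : Type*} (A : V → V → Prop) (m k : ℕ) (f : Fin (m + 1) → V)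
    (hf : ChainClique A (m + 1) k f) (i0 : Fin (m + 1)) (hi0 : (i0 : ℕ) + k < m + 1) (y : V)
    (hy : ∀ i, i ≠ i0 → A (f i) y) :
    ∃ g, ChainClique A (m + 1) (k + 1) g := by
  refine ⟨Fin.snoc (α := fun _ => V) (f ∘ i0.succAbove) y, ?_⟩
  intro i j hij
  induction j using Fin.lastCases with
  | last =>
    induction i using Fin.lastCases with
    | last => exact absurd hij (lt_irrefl _)
    | cast i =>
      have := hy (i0.succAbove i) (Fin.succAbove_ne i0 i)
      simp only [Fin.snoc_last, Fin.snoc_castSucc, Function.comp]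
      exact ⟨Or.inl this, fun _ => this⟩
  | cast j =>
    induction i using Fin.lastCases with
    | last => exact absurd hij (not_lt.mpr (Fin.le_last _))
    | cast i =>
      simp only [Fin.snoc_castSucc, Function.comp]
      have hij' : i < j := by simpa using hij
      have h := hf (i0.succAbove i) (i0.succAbove j) (Fin.succAbove_lt_succAbove_iff.mpr hij')
      refine ⟨h.1, fun hj => h.2 ?_⟩
      rw [Fin.val_castSucc] at hj
      rw [Fin.succAbove_of_le_castSucc i0 j (by rw [Fin.le_def, Fin.val_castSucc]; omega)]
      simp only [Fin.val_succ]
      omega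

lemma weight_total (r k : ℕ) (hk : k ≤ r) :
    ∑ i : Fin r, (if r ≤ (i : ℕ) + k then 2 else 1) = r + k := by
  rw [Fin.sum_univ_eq_sum_range (fun i => if r ≤ i + k then 2 else 1) r]
  have : ∀ i ∈ Finset.range r, (if r ≤ i + k then 2 else 1) = 1 + if r ≤ i + k then 1 else 0 := by
    intro i _; split_ifs <;> rfl
  rw [Finset.sum_congr rfl this, Finset.sum_add_distrib, Finset.sum_boole]
  have h2 : (Finset.range r).filter (fun i => r ≤ i + k) = Finset.Ico (r - k) r := by
    ext i; simp; omega
  rw [h2]; simp; omega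

open Classical in
lemma chainClique_exists_y {V : Type*} [Fintype V] (A : V → V → Prop) (r k : ℕ) (hr : 3 ≤ r)
    (hk : k + 3 ≤ r) (f : Fin r → V)
    (hdeg : ∀ v : V, (3 * r - 7) * Fintype.card V < (3 * r - 4) * Nat.card {u : V // A v u}) :
    ∃ y, ∃ i0 : Fin r, (i0 : ℕ) + k < r ∧ ∀ i, i ≠ i0 → A (f i) y := by
  by_contra! hcon
  set w : Fin r → ℕ := fun i => if r ≤ (i : ℕ) + k then 2 else 1 with hw
  have hW : ∑ i, w i = r + k := weight_total r k (by omega)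
  -- each vertex misses weight at least two
  have hmiss : ∀ y, 2 ≤ ∑ i, if A (f i) y then 0 else w i := by
    intro y
    have hpos : ∀ i, 1 ≤ w i := by intro i; simp only [hw]; split_ifs <;> omega
    obtain ⟨i, -, hi⟩ := hcon y ⟨0, by omega⟩ (by simp; omega)
    by_cases hik : (i : ℕ) + k < r
    · obtain ⟨j, hj, hj'⟩ := hcon y i hik
      have h1 : ∑ l ∈ {i, j}, (if A (f l) y then 0 else w l)
          ≤ ∑ l, if A (f l) y then 0 else w l :=
        Finset.sum_le_sum_of_subset (Finset.subset_univ _)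
      rw [Finset.sum_pair (Ne.symm hj), if_neg hi, if_neg hj'] at h1
      have := hpos i; have := hpos j; omega
    · have h1 := Finset.single_le_sum (f := fun l => if A (f l) y then 0 else w l)
        (fun _ _ => Nat.zero_le _) (Finset.mem_univ i)
      simp only [if_neg hi] at h1
      have : w i = 2 := by simp only [hw]; rw [if_pos (by omega)]
      omega
  have hhit : ∀ y, (∑ i, if A (f i) y then w i else 0) + 2 ≤ r + k := by
    intro y
    have : (∑ i, if A (f i) y then w i else 0) + (∑ i, if A (f i) y then 0 else w i)
        = r + k := by
      rw [← Finset.sum_add_distrib, ← hW]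
      refine Finset.sum_congr rfl fun i _ => ?_
      split_ifs <;> simp
    have := hmiss y; omega
  have hcount : ∑ i, w i * Nat.card {u : V // A (f i) u}
      = ∑ y, ∑ i, if A (f i) y then w i else 0 := by
    rw [Finset.sum_comm]
    refine Finset.sum_congr rfl fun i _ => ?_
    rw [Nat.card_eq_fintype_card, Fintype.card_subtype, ← Finset.sum_filter, Finset.sum_const,
      smul_eq_mul, mul_comm]
  have hup : ∑ i, w i * Nat.card {u : V // A (f i) u} + 2 * Fintype.card V
      ≤ (r + k) * Fintype.card V := by
    rw [hcount]
    calc _ = ∑ y : V, ((∑ i, if A (f i) y then w i else 0) + 2) := by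
            rw [Finset.sum_add_distrib]; simp [mul_comm]
      _ ≤ ∑ y : V, (r + k) := Finset.sum_le_sum fun y _ => hhit y
      _ = _ := by simp [mul_comm]
  have hlow : (r + k) * ((3 * r - 7) * Fintype.card V)
      ≤ (3 * r - 4) * ∑ i, w i * Nat.card {u : V // A (f i) u} := by
    rw [← hW, Finset.sum_mul, Finset.mul_sum]
    refine Finset.sum_le_sum fun i _ => ?_
    rw [mul_left_comm (3 * r - 4)]
    exact Nat.mul_le_mul_left _ (hdeg (f i)).le
  have hn : 0 < Fintype.card V := Fintype.card_pos_iff.mpr ⟨f ⟨0, by omega⟩⟩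
  obtain ⟨s, rfl⟩ : ∃ s, r = k + 3 + s := ⟨r - (k + 3), by omega⟩
  rw [show 3 * (k + 3 + s) - 7 = 3 * k + 3 * s + 2 by omega,
    show 3 * (k + 3 + s) - 4 = 3 * k + 3 * s + 5 by omega] at hlow
  have h3 := Nat.mul_le_mul_left (3 * k + 3 * s + 5) hup
  nlinarith [Nat.zero_le (s * Fintype.card V)]


/-- Directed Andrásfai–Erdős–Sós theorem: if `D` on `n` vertices contains no
transitive tournament on `r ≥ 3` vertices and every out-degree exceeds
`((3r−7)/(3r−4))·n`, then the underlying graph of `D` is `(r−1)`-colorable. -/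
theorem stmt_8 {V : Type*} [Fintype V] (n r : ℕ) (hn : Fintype.card V = n) (hr : 3 ≤ r)
    (A : V → V → Prop) (hirr : ∀ v, ¬ A v v)
    (hfree : ¬ ∃ f : Fin r → V, Function.Injective f ∧ ∀ i j : Fin r, i < j → A (f i) (f j))
    (hdeg : ∀ v : V, (3 * (r : ℝ) - 7) / (3 * (r : ℝ) - 4) * n < Nat.card {u : V // A v u}) :
    ∃ col : V → Fin (r - 1), ∀ u v : V, A u v → col u ≠ col v := by
  classical
  have hdeg' : ∀ v : V,
      (3 * r - 7) * Fintype.card V < (3 * r - 4) * Nat.card {u : V // A v u} := by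
    intro v
    have h := hdeg v
    have hr' : (3 : ℝ) ≤ r := by exact_mod_cast hr
    have hpos : (0 : ℝ) < 3 * r - 4 := by linarith
    rw [div_mul_eq_mul_div, div_lt_iff₀ hpos] at h
    rw [hn]
    have : (((3 * r - 7) * n : ℕ) : ℝ) < (((3 * r - 4) * Nat.card {u : V // A v u} : ℕ) : ℝ) := by
      rw [Nat.cast_mul, Nat.cast_mul, Nat.cast_sub (by omega), Nat.cast_sub (by omega)]
      push_cast
      linarith
    exact_mod_cast this
  let G : SimpleGraph V :=
    { Adj := fun u v => A u v ∨ A v u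
      symm := ⟨fun u v h => h.symm⟩
      loopless := ⟨fun v h => by simp [hirr] at h⟩ }
  have hfree' : G.CliqueFree (r - 1 + 1) := by
    rw [Nat.sub_add_cancel (by omega)]
    by_contra hc
    let e := SimpleGraph.topEmbeddingOfNotCliqueFree hc
    have key : ∀ k, k + 2 ≤ r → ∃ f, ChainClique A r k f := by
      intro k
      induction k with
      | zero =>
        intro _
        refine ⟨e, fun i j hij => ⟨?_, fun h => ?_⟩⟩
        · have : G.Adj (e i) (e j) := e.map_rel_iff.mpr hij.ne
          exact this
        · have := j.2; omega
      | succ k ih =>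
        intro hk
        obtain ⟨f, hf⟩ := ih (by omega)
        obtain ⟨y, i0, hi0, hy⟩ := chainClique_exists_y A r k hr (by omega) f hdeg'
        obtain ⟨m, rfl⟩ : ∃ m, r = m + 1 := ⟨r - 1, by omega⟩
        exact chainClique_step A m k f hf i0 hi0 y hy
    obtain ⟨f, hf⟩ := key (r - 2) (by omega)
    -- order the first two vertices
    have fin : ∀ g : Fin r → V, (∀ i j : Fin r, i < j → A (g i) (g j)) → False := by
      intro g hg
      refine hfree ⟨g, fun i j hij => ?_, hg⟩
      by_contra hne
      rcases lt_or_gt_of_ne hne with h | h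
      · have := hg _ _ h; rw [hij] at this; exact hirr _ this
      · have := hg _ _ h; rw [hij] at this; exact hirr _ this
    let a : Fin r := ⟨0, by omega⟩
    let b : Fin r := ⟨1, by omega⟩
    have hab : a < b := by simp [a, b, Fin.lt_def]
    have hbig : ∀ i j : Fin r, i < j → j ≠ b → A (f i) (f j) := by
      intro i j hij hj
      refine (hf i j hij).2 ?_
      have h1 : (j : ℕ) ≠ 1 := fun h => hj (Fin.ext h)
      have h2 : (i : ℕ) < j := hij
      omega
    have hlt : ∀ i : Fin r, i < b → i = a := by
      intro i hi
      have : (i : ℕ) < 1 := hi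
      exact Fin.ext (by simp [a]; omega)
    rcases (hf a b hab).1 with h | h
    · refine fin f fun i j hij => ?_
      by_cases hj : j = b
      · subst hj; rw [hlt i hij]; exact h
      · exact hbig i j hij hj
    · refine fin (f ∘ Equiv.swap a b) fun i j hij => ?_
      simp only [Function.comp]
      by_cases hj : j = b
      · subst hj; rw [hlt i hij]; simpa using h
      · have hja : j ≠ a := by
          rintro rfl
          have : (i : ℕ) < 0 := hij
          omega
        rw [Equiv.swap_apply_of_ne_of_ne hja hj]
        refine hbig _ _ ?_ hj
        have h1 : (j : ℕ) ≠ 1 := fun h => hj (Fin.ext h)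
        have h0 : (j : ℕ) ≠ 0 := fun h => hja (Fin.ext h)
        rw [Equiv.swap_apply_def]
        split_ifs
        · show 1 < (j : ℕ); omega
        · show 0 < (j : ℕ); omega
        · exact hij
  rcases isEmpty_or_nonempty V with hV | hV
  · exact ⟨fun v => hV.elim v, fun v => hV.elim v⟩
  have hmin : (3 * (r - 1) - 4) * Fintype.card V / (3 * (r - 1) - 1) < G.minDegree := by
    obtain ⟨v, hv⟩ := G.exists_minimal_degree_vertex
    rw [hv, Nat.div_lt_iff_lt_mul (by omega)]
    have h1 : Nat.card {u : V // A v u} ≤ G.degree v := by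
      rw [Nat.card_eq_fintype_card, Fintype.card_subtype, ← SimpleGraph.card_neighborFinset_eq_degree]
      refine Finset.card_le_card fun u hu => ?_
      rw [SimpleGraph.mem_neighborFinset]
      exact Or.inl (by simpa using hu)
    have h2 := hdeg' v
    rw [show 3 * (r - 1) - 4 = 3 * r - 7 by omega, show 3 * (r - 1) - 1 = 3 * r - 4 by omega,
      mul_comm (G.degree v)]
    exact h2.trans_le (Nat.mul_le_mul_left _ h1)
  obtain ⟨c⟩ := SimpleGraph.colorable_of_cliqueFree_lt_minDegree hfree' hmin
  exact ⟨c, fun u v huv => c.valid (Or.inl huv)⟩
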